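/- arXiv:2112.05426 — 2 statements merged into one kernel-verified Lean document; each statement's English description precedes it below -/
import Mathlib

section
/- For every real α > 1 and every ε > 0 there exist a positive integer k with k ≤ 2·⌈(2^α/ε)^{1/(α−1)}⌉ + 6 and a function F assigning to every finite set P ⊂ ℝ with 0 ∈ P a feasible range assignment F(P) for P (with source 0) such that: (i) cost_α(F(P)) ≤ (1+ε)·opt_α(P) for every such P, and (ii) for every such P and every q ∈ ℝ ∖ P, the number of points p ∈ P ∪ {q} with F(P∪{q})(p) ≠ F(P)(p) is at most k, where F(P) is extended by F(P)(q) = 0. (This expresses that the dynamic broadcast range-assignment problem in ℝ¹ admits a stable approximation scheme with stability parameter k(ε) = O((1/ε)^{1/(α−1)}), covering both insertions and deletions.) -/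
open Finset

attribute [local instance] Classical.propDecidable

/-- A range assignment `ρ` for a finite point set `P` with source `s` is *feasible* if it is
nonnegative on `P` and every point of `P` is reachable from `s` via a sequence of points of `P`
in which each step is within the range of its starting point. -/
def Feasible {X : Type*} [MetricSpace X] (P : Finset X) (s : X) (ρ : X → ℝ) : Prop :=
  (∀ p ∈ P, 0 ≤ ρ p) ∧
  ∀ p ∈ P, ∃ (m : ℕ) (f : ℕ → X), f 0 = s ∧ f m = p ∧ (∀ i ≤ m, f i ∈ P) ∧
    ∀ i < m, dist (f i) (f (i + 1)) ≤ ρ (f i)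

/-- The cost `∑_{p ∈ P} ρ(p)^α` of a range assignment. -/
noncomputable def cost {X : Type*} (α : ℝ) (P : Finset X) (ρ : X → ℝ) : ℝ :=
  ∑ p ∈ P, ρ p ^ α

/-- The optimal broadcast cost: the infimum of `cost α P ρ` over feasible `ρ`. -/
noncomputable def opt {X : Type*} [MetricSpace X] (α : ℝ) (P : Finset X) (s : X) : ℝ :=
  sInf {c : ℝ | ∃ ρ : X → ℝ, Feasible P s ρ ∧ cost α P ρ = c}

/-!
In the standard assignment every point reaches its neighbours away from the source. It need not be
nearly optimal, but inserting a point changes it at a single old point, the neighbour of the new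
point towards the source.

Given any feasible assignment, consider the points in the order in which they are first reached. As
long as a sender reaches new points on its own side of the source only, the gaps newly bridged are
disjoint intervals of total length at most its range, and `α ≥ 1` makes the sum of their powers at
most the power of the range. Whenever the message jumps over the source, forget the past: the range
of the current sender covers everything reached so far on the other side. So there is a pivot `p`,
with range `t`, for which `t ^ α` plus the standard cost of all gaps not bridged by `p` is at most
the given cost.

The gaps bridged by `p` sum to at most `2 * t`. Dropping from the standard assignment only those
longer than `2 * t / K` changes at most `K + 1` ranges, and the short gaps that are kept cost at
most `(2 * t / K) ^ (α - 1) * (2 * t) ≤ ε * t ^ α`. Hence every point set has an assignment within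
a factor `1 + ε` of the optimum that differs from the standard one in at most `K + 1` points, and
one insertion changes at most `2 * (K + 1) + 2` of its ranges.
-/

section Sums

variable {ι : Type*} {S : Finset ι} {α : ℝ}

lemma cost_insert {ρ : ι → ℝ} {z : ι} (hz : z ∉ S) :
    cost α (insert z S) ρ = ρ z ^ α + cost α S ρ :=
  sum_insert hz

lemma sum_rpow_le_rpow_sum {f : ι → ℝ} (hα : 1 ≤ α) (hf : ∀ i ∈ S, 0 ≤ f i) :
    ∑ i ∈ S, f i ^ α ≤ (∑ i ∈ S, f i) ^ α := by
  induction S using Finset.cons_induction with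
  | empty => simp [Real.zero_rpow (by linarith : α ≠ 0)]
  | cons a S ha ih =>
    rw [forall_mem_cons] at hf
    rw [sum_cons, sum_cons]
    calc f a ^ α + ∑ i ∈ S, f i ^ α ≤ f a ^ α + (∑ i ∈ S, f i) ^ α := by gcongr; exact ih hf.2
      _ ≤ _ := Real.add_rpow_le_rpow_add hf.1 (sum_nonneg hf.2) hα

lemma sum_rpow_le_rpow_sub_one_mul_sum {f : ι → ℝ} {c : ℝ} (hα : 1 ≤ α)
    (hf : ∀ i ∈ S, 0 ≤ f i) (hc : ∀ i ∈ S, f i ≤ c) :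
    ∑ i ∈ S, f i ^ α ≤ c ^ (α - 1) * ∑ i ∈ S, f i := by
  rw [mul_sum]
  gcongr with i hi
  calc f i ^ α = f i ^ (α - 1) * f i := by
        rw [← Real.rpow_add_one' (hf i hi) (by linarith), sub_add_cancel]
    _ ≤ c ^ (α - 1) * f i := mul_le_mul_of_nonneg_right
        (Real.rpow_le_rpow (hf i hi) (hc i hi) (by linarith)) (hf i hi)

lemma card_filter_lt_le_of_sum_le {R : Type*} [Semiring R] [LinearOrder R] [IsStrictOrderedRing R]
    {f : ι → R} {c : R} {K : ℕ} (hc : 0 ≤ c) (hf : ∀ i ∈ S, 0 ≤ f i)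
    (hsum : ∑ i ∈ S, f i ≤ K * c) : #{i ∈ S | c < f i} ≤ K := by
  by_contra! hK
  have hne : {i ∈ S | c < f i}.Nonempty := card_pos.1 (by omega)
  have : (K : R) * c < K * c :=
    calc (K : R) * c ≤ #{i ∈ S | c < f i} * c := by gcongr
      _ = ∑ i ∈ S with c < f i, c := by rw [sum_const, nsmul_eq_mul]
      _ < ∑ i ∈ S with c < f i, f i := sum_lt_sum_of_nonempty hne fun i hi => (mem_filter.1 hi).2
      _ ≤ ∑ i ∈ S, f i := sum_le_sum_of_subset_of_nonneg (filter_subset _ _) fun i hi _ => hf i hi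
      _ ≤ K * c := hsum
  exact this.false

lemma sum_le_sum_add_sum_of_subset_union {M : Type*} [AddCommMonoid M] [PartialOrder M]
    [IsOrderedAddMonoid M] {A B : Finset ι} {f : ι → M} (hf : ∀ i, 0 ≤ f i) (hS : S ⊆ A ∪ B) :
    ∑ i ∈ S, f i ≤ ∑ i ∈ A, f i + ∑ i ∈ B, f i :=
  calc ∑ i ∈ S, f i ≤ ∑ i ∈ A ∪ B, f i := sum_le_sum_of_subset_of_nonneg hS fun i _ _ => hf i
    _ ≤ ∑ i ∈ A ∪ B, f i + ∑ i ∈ A ∩ B, f i := le_add_of_nonneg_right (sum_nonneg fun i _ => hf i)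
    _ = _ := sum_union_inter

lemma sum_sub_le_sub_of_nonoverlapping {G : Type*} [AddCommGroup G] [LinearOrder G]
    [IsOrderedAddMonoid G] {a b : ι → G} {u v : G} (huv : u ≤ v) (hu : ∀ i ∈ S, u ≤ a i)
    (hv : ∀ i ∈ S, b i ≤ v) (hab : ∀ i ∈ S, ∀ j ∈ S, i ≠ j → b i ≤ b j → b i ≤ a j) :
    ∑ i ∈ S, (b i - a i) ≤ v - u := by
  induction S using Finset.induction_on_max_value b generalizing v with
  | empty => simpa using huv
  | insert j S hj hmax ih =>
    rw [forall_mem_insert] at hu hv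
    have hrest : ∑ i ∈ S, (b i - a i) ≤ a j - u :=
      ih hu.1 hu.2
        (fun i hi => hab i (mem_insert_of_mem hi) j (mem_insert_self j S)
          (ne_of_mem_of_not_mem hi hj) (hmax i hi))
        fun i hi k hk => hab i (mem_insert_of_mem hi) k (mem_insert_of_mem hk)
    calc ∑ i ∈ insert j S, (b i - a i) = b j - a j + ∑ i ∈ S, (b i - a i) := sum_insert hj
      _ ≤ v - a j + (a j - u) := add_le_add (sub_le_sub_right hv.1 _) hrest
      _ = v - u := sub_add_sub_cancel v (a j) u

lemma rpow_sub_one_mul_le_mul_rpow {ε t K : ℝ} (hα : 1 < α) (hε : 0 < ε) (ht : 0 ≤ t)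
    (hK : (2 ^ α / ε) ^ (1 / (α - 1)) ≤ K) :
    (2 * t / K) ^ (α - 1) * (2 * t) ≤ ε * t ^ α := by
  have hα' : 0 < α - 1 := sub_pos.2 hα
  have hK0 : 0 < K := lt_of_lt_of_le (by positivity) hK
  have hpow : 2 ^ α / ε ≤ K ^ (α - 1) := by
    rwa [← Real.rpow_inv_le_iff_of_pos (by positivity) hK0.le hα', ← one_div]
  calc (2 * t / K) ^ (α - 1) * (2 * t) = 2 ^ α * t ^ α / K ^ (α - 1) := by
        rw [Real.div_rpow (by positivity) hK0.le, div_mul_eq_mul_div,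
          ← Real.rpow_add_one' (by positivity) (by linarith), sub_add_cancel,
          Real.mul_rpow zero_le_two ht]
    _ ≤ ε * t ^ α := by
        rw [div_le_iff₀ (by positivity)]
        calc 2 ^ α * t ^ α ≤ K ^ (α - 1) * ε * t ^ α := by
              gcongr; exact (div_le_iff₀ hε).1 hpow
          _ = ε * t ^ α * K ^ (α - 1) := by ring

end Sums

section Reachability

variable {X : Type*} [MetricSpace X] {P Z : Finset X} {ρ : X → ℝ} {s p q : X}

/-- The reachability clause of `Feasible`: a message can travel from `s` to `p` by steps between
points of `P`, each within the range of its starting point. -/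
def Reaches (P : Finset X) (ρ : X → ℝ) (s p : X) : Prop :=
  ∃ (m : ℕ) (f : ℕ → X), f 0 = s ∧ f m = p ∧ (∀ i ≤ m, f i ∈ P) ∧
    ∀ i < m, dist (f i) (f (i + 1)) ≤ ρ (f i)

lemma Reaches.refl (hs : s ∈ P) : Reaches P ρ s s :=
  ⟨0, fun _ => s, rfl, rfl, fun _ _ => hs, fun _ hi => absurd hi (Nat.not_lt_zero _)⟩

lemma Reaches.tail (h : Reaches P ρ s p) (hq : q ∈ P) (hpq : dist p q ≤ ρ p) :
    Reaches P ρ s q := by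
  obtain ⟨m, f, rfl, rfl, hP, hstep⟩ := h
  refine ⟨m + 1, fun i => if i ≤ m then f i else q, by simp, by simp, fun i _ => ?_,
    fun i hi => ?_⟩
  · by_cases him : i ≤ m
    · simpa [him] using hP i him
    · simpa [him] using hq
  · rcases Nat.lt_succ_iff_lt_or_eq.1 hi with him | rfl
    · simpa [him.le, Nat.succ_le_of_lt him] using hstep i him
    · simpa using hpq

lemma Reaches.exists_exit (h : Reaches P ρ s p) (hs : s ∈ Z) (hp : p ∉ Z) :
    ∃ a ∈ Z, ∃ b ∈ P, b ∉ Z ∧ dist a b ≤ ρ a := by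
  obtain ⟨m, f, rfl, rfl, hP, hstep⟩ := h
  by_contra! hstay
  have hZ : ∀ i ≤ m, f i ∈ Z := by
    intro i hi
    induction i with
    | zero => exact hs
    | succ i ih =>
      by_contra hout
      exact (hstay _ (ih (by omega)) _ (hP _ hi) hout).not_ge (hstep i hi)
  exact hp (hZ m le_rfl)

theorem Feasible.set_induction {Q : Finset X → Prop} (h : Feasible P s ρ) (hs : s ∈ P)
    (source : Q {s})
    (step : ∀ Z ⊆ P, Q Z → ∀ a ∈ Z, ∀ b ∈ P, b ∉ Z → dist a b ≤ ρ a → Q (insert b Z)) :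
    Q P := by
  obtain ⟨Z, hZ⟩ := {Z ∈ P.powerset | s ∈ Z ∧ Q Z}.exists_maximal
    ⟨{s}, by simpa [hs] using source⟩
  obtain ⟨hZP, hsZ, hQ⟩ : Z ⊆ P ∧ s ∈ Z ∧ Q Z := by simpa using hZ.prop
  by_cases hPZ : P ⊆ Z
  · rwa [hPZ.antisymm hZP]
  obtain ⟨p, hp, hpZ⟩ := not_subset.1 hPZ
  obtain ⟨a, ha, b, hb, hbZ, hab⟩ := Reaches.exists_exit (h.2 p hp) hsZ hpZ
  have hmem : insert b Z ∈ {Z ∈ P.powerset | s ∈ Z ∧ Q Z} := by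
    simpa [insert_subset_iff, hb, hZP, hsZ] using step Z hZP hQ a ha b hb hbZ hab
  exact absurd (hZ.le_of_ge hmem (subset_insert b Z) (mem_insert_self b Z)) hbZ

/-- The points of `P` that hear some point of `Z` directly under the range assignment `ρ`. -/
noncomputable def covered (P : Finset X) (ρ : X → ℝ) (Z : Finset X) : Finset X :=
  {q ∈ P | ∃ z ∈ Z, dist z q ≤ ρ z}

lemma mem_covered : q ∈ covered P ρ Z ↔ q ∈ P ∧ ∃ z ∈ Z, dist z q ≤ ρ z := mem_filter

lemma mem_covered_insert {z : X} :
    q ∈ covered P ρ (insert z Z) ↔ q ∈ covered P ρ Z ∨ q ∈ P ∧ dist z q ≤ ρ z := by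
  simp only [mem_covered, exists_mem_insert]
  rw [and_or_left, or_comm]

lemma covered_self (hρ : ∀ p ∈ P, 0 ≤ ρ p) : covered P ρ P = P :=
  filter_true_of_mem fun p hp => ⟨p, hp, by simpa using hρ p hp⟩

end Reachability

section Line

open scoped NNReal

lemma dist_eq_abs_sub_abs_of_mem_uIcc {q r : ℝ} (h : r ∈ Set.uIcc 0 q) :
    dist q r = |q| - |r| := by
  rcases Set.mem_uIcc.1 h with ⟨h₀, h₁⟩ | ⟨h₁, h₀⟩
  · rw [Real.dist_eq, abs_of_nonneg h₀, abs_of_nonneg (h₀.trans h₁),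
      abs_of_nonneg (sub_nonneg.2 h₁)]
  · rw [Real.dist_eq, abs_of_nonpos h₀, abs_of_nonpos (h₁.trans h₀),
      abs_of_nonpos (sub_nonpos.2 h₁)]
    ring

lemma abs_le_abs_of_mem_uIcc_zero {q r : ℝ} (h : r ∈ Set.uIcc 0 q) : |r| ≤ |q| :=
  sub_nonneg.1 (dist_eq_abs_sub_abs_of_mem_uIcc h ▸ dist_nonneg)

lemma mem_uIcc_zero_of_abs_le {w q r : ℝ} (hw : w ≠ 0) (hr : 0 ≤ w * r) (hq : 0 ≤ w * q)
    (h : |r| ≤ |q|) : r ∈ Set.uIcc 0 q := by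
  rw [Set.mem_uIcc]
  rcases hw.lt_or_gt with hw | hw
  · rw [← neg_mul_neg, mul_nonneg_iff_of_pos_left (neg_pos.2 hw), neg_nonneg] at hr hq
    rw [abs_of_nonpos hr, abs_of_nonpos hq] at h
    exact Or.inr ⟨neg_le_neg_iff.1 h, hr⟩
  · rw [mul_nonneg_iff_of_pos_left hw] at hr hq
    rw [abs_of_nonneg hr, abs_of_nonneg hq] at h
    exact Or.inl ⟨hr, h⟩

lemma mul_nonneg_of_mem_uIcc_zero {w q r : ℝ} (h : r ∈ Set.uIcc 0 q) (hq : 0 ≤ w * q) :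
    0 ≤ w * r := by
  rcases Set.mem_uIcc.1 h with ⟨h₀, h₁⟩ | ⟨h₁, h₀⟩ <;> rcases le_total 0 w with hw | hw
  · exact mul_nonneg hw h₀
  · exact hq.trans (mul_le_mul_of_nonpos_left h₁ hw)
  · exact hq.trans (mul_le_mul_of_nonneg_left h₁ hw)
  · exact mul_nonneg_of_nonpos_of_nonpos hw h₀

lemma mem_uIcc_zero_of_mem_of_abs_le {q r u : ℝ} (hr : r ∈ Set.uIcc 0 q) (hu : u ∈ Set.uIcc 0 q)
    (h : |r| ≤ |u|) : r ∈ Set.uIcc 0 u := by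
  rcases eq_or_ne q 0 with rfl | hq
  · rw [Set.uIcc_self, Set.mem_singleton_iff] at hr
    exact hr ▸ Set.left_mem_uIcc
  · exact mem_uIcc_zero_of_abs_le hq (mul_nonneg_of_mem_uIcc_zero hr (mul_self_nonneg q))
      (mul_nonneg_of_mem_uIcc_zero hu (mul_self_nonneg q)) h

lemma eq_of_mem_uIcc_zero_of_abs_eq {q r : ℝ} (h : r ∈ Set.uIcc 0 q) (habs : |r| = |q|) :
    r = q :=
  (dist_eq_zero.1 (by rw [dist_eq_abs_sub_abs_of_mem_uIcc h, habs, sub_self])).symm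

variable {P S : Finset ℝ} {p q r t x : ℝ}

/-- The points of `P` between the source and `q`, other than `q` itself. -/
noncomputable def inward (P : Finset ℝ) (q : ℝ) : Finset ℝ := {r ∈ P | r ∈ Set.uIcc 0 q ∧ r ≠ q}

lemma mem_inward : r ∈ inward P q ↔ r ∈ P ∧ r ∈ Set.uIcc 0 q ∧ r ≠ q := mem_filter

lemma mem_inward_of_abs_le {w : ℝ} (hw : w ≠ 0) (hr : 0 ≤ w * r) (hq : 0 ≤ w * q) (hrP : r ∈ P)
    (h : |r| ≤ |q|) (hne : r ≠ q) : r ∈ inward P q :=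
  mem_inward.2 ⟨hrP, mem_uIcc_zero_of_abs_le hw hr hq h, hne⟩

/-- `r` is the neighbour of `q` in `P` in the direction of the source. -/
def IsPred (P : Finset ℝ) (r q : ℝ) : Prop := r ∈ inward P q ∧ ∀ u ∈ inward P q, |u| ≤ |r|

lemma exists_isPred (h0 : 0 ∈ P) (hq : q ≠ 0) : ∃ r, IsPred P r q :=
  exists_max_image _ abs ⟨0, mem_inward.2 ⟨h0, Set.left_mem_uIcc, hq.symm⟩⟩

lemma IsPred.unique {r' : ℝ} (h : IsPred P r q) (h' : IsPred P r' q) : r = r' := by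
  obtain ⟨-, hr, -⟩ := mem_inward.1 h.1
  obtain ⟨-, hr', -⟩ := mem_inward.1 h'.1
  have habs : |r| = |r'| := (h'.2 r h.1).antisymm (h.2 r' h'.1)
  exact eq_of_mem_uIcc_zero_of_abs_eq (mem_uIcc_zero_of_mem_of_abs_le hr hr' habs.le) habs

lemma IsPred.abs_lt_abs (h : IsPred P r q) : |r| < |q| :=
  have ⟨_, hr, hne⟩ := mem_inward.1 h.1
  (abs_le_abs_of_mem_uIcc_zero hr).lt_of_ne (hne <| eq_of_mem_uIcc_zero_of_abs_eq hr ·)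

theorem isPred_induction {Q : ℝ → Prop} (h0 : 0 ∈ P) (source : Q 0)
    (step : ∀ q ∈ P, ∀ r ∈ P, IsPred P r q → Q r → Q q) : ∀ q ∈ P, Q q := by
  by_contra! hbad
  obtain ⟨q, hq, hmin⟩ := exists_min_image {q ∈ P | ¬ Q q} abs
    (hbad.imp fun q hq => mem_filter.2 hq)
  obtain ⟨hqP, hQq⟩ := mem_filter.1 hq
  obtain ⟨r, hr⟩ := exists_isPred (q := q) h0 (by rintro rfl; exact hQq source)
  have hrP : r ∈ P := (mem_inward.1 hr.1).1
  refine hQq (step q hqP r hrP hr ?_)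
  by_contra hQr
  exact (hmin r (mem_filter.2 ⟨hrP, hQr⟩)).not_gt hr.abs_lt_abs

lemma IsPred.of_insert (h : IsPred (insert x P) r q) (hr : r ∈ P) : IsPred P r q :=
  ⟨mem_inward.2 ⟨hr, (mem_inward.1 h.1).2⟩, fun u hu => h.2 u <|
    mem_inward.2 ⟨mem_insert_of_mem (mem_inward.1 hu).1, (mem_inward.1 hu).2⟩⟩

lemma IsPred.insert (h : IsPred P r q) (hx : ¬ IsPred (insert x P) r x) :
    IsPred (insert x P) r q := by
  obtain ⟨hrP, hrq, hrne⟩ := mem_inward.1 h.1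
  refine ⟨mem_inward.2 ⟨mem_insert_of_mem hrP, hrq, hrne⟩, fun u hu => ?_⟩
  obtain ⟨huP, huq, hune⟩ := mem_inward.1 hu
  rcases mem_insert.1 huP with rfl | huP
  · by_contra! hru
    have hru' : r ∈ Set.uIcc 0 u := mem_uIcc_zero_of_mem_of_abs_le hrq huq hru.le
    refine hx ⟨mem_inward.2 ⟨mem_insert_of_mem hrP, hru', ne_of_apply_ne abs hru.ne⟩,
      fun v hv => ?_⟩
    obtain ⟨hvP, hvu, hvne⟩ := mem_inward.1 hv
    refine h.2 v (mem_inward.2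
      ⟨mem_of_mem_insert_of_ne hvP hvne, Set.uIcc_subset_uIcc_left huq hvu, ?_⟩)
    rintro rfl
    exact hvne (eq_of_mem_uIcc_zero_of_abs_eq hvu
      ((abs_le_abs_of_mem_uIcc_zero hvu).antisymm (abs_le_abs_of_mem_uIcc_zero huq)))
  · exact h.2 u (mem_inward.2 ⟨huP, huq, hune⟩)

/-- The distance from `q` to its neighbour in `P` in the direction of the source; it is `0` when
`q` is the source, by the convention for the distance to the empty set. -/
noncomputable def gap (P : Finset ℝ) (q : ℝ) : ℝ := Metric.infDist q (inward P q)

lemma gap_nonneg (P : Finset ℝ) (q : ℝ) : 0 ≤ gap P q := Metric.infDist_nonneg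

lemma gap_rpow_nonneg (P : Finset ℝ) (q α : ℝ) : 0 ≤ gap P q ^ α :=
  Real.rpow_nonneg (gap_nonneg P q) α

lemma gap_zero : gap P 0 = 0 := by
  have : inward P 0 = ∅ := by simp [inward]
  simp [gap, this]

lemma abs_le_abs_sub_gap (hr : r ∈ inward P q) : |r| ≤ |q| - gap P q := by
  rw [le_sub_comm, ← dist_eq_abs_sub_abs_of_mem_uIcc (mem_inward.1 hr).2.1]
  exact Metric.infDist_le_dist_of_mem hr

lemma gap_le_abs (h0 : 0 ∈ P) : gap P q ≤ |q| := by
  rcases eq_or_ne q 0 with rfl | hq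
  · simp [gap_zero]
  · simpa using abs_le_abs_sub_gap (mem_inward.2 ⟨h0, Set.left_mem_uIcc, hq.symm⟩)

lemma IsPred.dist_eq_gap (h : IsPred P r q) : dist r q = gap P q := by
  refine le_antisymm ((Metric.le_infDist ⟨r, h.1⟩).2 fun u hu => ?_) ?_
  · rw [dist_comm, dist_eq_abs_sub_abs_of_mem_uIcc (mem_inward.1 h.1).2.1,
      dist_eq_abs_sub_abs_of_mem_uIcc (mem_inward.1 hu).2.1]
    exact sub_le_sub_left (h.2 u hu) _
  · rw [dist_comm]
    exact Metric.infDist_le_dist_of_mem h.1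

lemma abs_le_dist_of_mul_neg {w z q : ℝ} (hz : w * z < 0) (hq : 0 ≤ w * q) : |q| ≤ dist z q := by
  have hzq : z * q ≤ 0 :=
    nonpos_of_mul_nonpos_right
      (mul_mul_mul_comm w z w q ▸ mul_nonpos_of_nonpos_of_nonneg hz.le hq)
      (mul_self_pos.2 (left_ne_zero_of_mul hz.ne))
  rw [Real.dist_eq]
  exact sq_le_sq.1 (by nlinarith [sq_nonneg z])

/-- The points of `P` within distance `t` of `p` that do not lie between the source and `p`. -/
noncomputable def captured (P : Finset ℝ) (p t : ℝ) : Finset ℝ :=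
  {q ∈ P | dist p q ≤ t ∧ q ∉ Set.uIcc 0 p}

lemma mem_captured : q ∈ captured P p t ↔ q ∈ P ∧ dist p q ≤ t ∧ q ∉ Set.uIcc 0 p := mem_filter

lemma sum_gap_le_sub_of_side {T : Finset ℝ} {w u v : ℝ} (hT : T ⊆ P) (hw : w ≠ 0)
    (hside : ∀ q ∈ T, 0 ≤ w * q) (huv : u ≤ v) (hu : ∀ q ∈ T, u ≤ |q| - gap P q)
    (hv : ∀ q ∈ T, |q| ≤ v) : ∑ q ∈ T, gap P q ≤ v - u :=
  -- On one side of the source the intervals of length `gap P q` ending in `q` do not overlap.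
  calc ∑ q ∈ T, gap P q = ∑ q ∈ T, (|q| - (|q| - gap P q)) := by simp only [sub_sub_cancel]
    _ ≤ v - u := sum_sub_le_sub_of_nonoverlapping huv hu hv fun q hq r hr hqr habs =>
        abs_le_abs_sub_gap
          (mem_inward_of_abs_le hw (hside q hq) (hside r hr) (hT hq) habs hqr)

lemma sum_gap_captured_side_le {w : ℝ} (h0 : 0 ∈ P) (hp : p ∈ P) (ht : 0 ≤ t) (hw : w ≠ 0) :
    ∑ q ∈ captured P p t with 0 ≤ w * q, gap P q ≤ t := by
  have hsub : {q ∈ captured P p t | 0 ≤ w * q} ⊆ P :=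
    (filter_subset _ _).trans (filter_subset _ _)
  have hside : ∀ q ∈ {q ∈ captured P p t | 0 ≤ w * q}, 0 ≤ w * q := fun q hq =>
    (mem_filter.1 hq).2
  have hcapt : ∀ q ∈ {q ∈ captured P p t | 0 ≤ w * q}, dist p q ≤ t ∧ q ∉ Set.uIcc 0 p :=
    fun q hq => (mem_captured.1 (mem_filter.1 hq).1).2
  rcases le_or_gt 0 (w * p) with hwp | hwp
  · have hp_inward : ∀ q ∈ {q ∈ captured P p t | 0 ≤ w * q}, p ∈ inward P q := by
      intro q hq
      have hqp : q ∉ Set.uIcc 0 p := (hcapt q hq).2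
      refine mem_inward_of_abs_le hw hwp (hside q hq) hp ?_ ?_
      · exact le_of_not_ge fun h => hqp (mem_uIcc_zero_of_abs_le hw (hside q hq) hwp h)
      · rintro rfl
        exact hqp Set.right_mem_uIcc
    have hv : ∀ q ∈ {q ∈ captured P p t | 0 ≤ w * q}, |q| ≤ |p| + t := by
      intro q hq
      have hdist := dist_eq_abs_sub_abs_of_mem_uIcc (mem_inward.1 (hp_inward q hq)).2.1
      rw [dist_comm] at hdist
      linarith [(hcapt q hq).1]
    exact (sum_gap_le_sub_of_side hsub hw hside (le_add_of_nonneg_right ht)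
      (fun q hq => abs_le_abs_sub_gap (hp_inward q hq)) hv).trans_eq (add_sub_cancel_left _ _)
  · exact (sum_gap_le_sub_of_side hsub hw hside ht (fun q _ => sub_nonneg.2 (gap_le_abs h0))
      fun q hq => (abs_le_dist_of_mul_neg hwp (hside q hq)).trans (hcapt q hq).1).trans_eq
        (sub_zero t)

lemma sum_gap_captured_le (h0 : 0 ∈ P) (hp : p ∈ P) (ht : 0 ≤ t) :
    ∑ q ∈ captured P p t, gap P q ≤ 2 * t := by
  have hpos := sum_gap_captured_side_le h0 hp ht one_ne_zero
  have hneg := sum_gap_captured_side_le h0 hp ht (neg_ne_zero.2 one_ne_zero)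
  have hunion : captured P p t ⊆
      {q ∈ captured P p t | 0 ≤ 1 * q} ∪ {q ∈ captured P p t | 0 ≤ -1 * q} := by
    intro q hq
    simpa [hq] using le_total 0 q
  linarith [sum_le_sum_add_sum_of_subset_union (gap_nonneg P) hunion]

lemma sum_gap_rpow_captured_side_le {w α : ℝ} (hα : 1 ≤ α) (h0 : 0 ∈ P) (hp : p ∈ P) (ht : 0 ≤ t)
    (hw : w ≠ 0) : ∑ q ∈ captured P p t with 0 ≤ w * q, gap P q ^ α ≤ t ^ α :=
  calc _ ≤ (∑ q ∈ captured P p t with 0 ≤ w * q, gap P q) ^ α :=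
        sum_rpow_le_rpow_sum hα fun q _ => gap_nonneg P q
    _ ≤ t ^ α := Real.rpow_le_rpow (sum_nonneg fun q _ => gap_nonneg P q)
        (sum_gap_captured_side_le h0 hp ht hw) (by linarith)

/-- What an induction along the order in which points are first reached maintains about the set `Z`
of points that have already sent: the points they cover are closed under moving towards the source,
the gaps of these points on either side of the source (`0 ≤ w * q` selects the side of `w`) are paid
for by `Z`, and some point of `P` captures so many of them that its cost together with the
remaining gaps is paid for by `Z`. -/
structure BroadcastInvariant (α : ℝ) (P : Finset ℝ) (ρ : ℝ → ℝ) (Z : Finset ℝ) : Prop where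
  source_mem : 0 ∈ Z
  inward_closed : ∀ q ∈ covered P ρ Z, ∀ r ∈ P, r ∈ Set.uIcc 0 q → r ∈ covered P ρ Z
  side_le : ∀ w ≠ 0, ∑ q ∈ covered P ρ Z with 0 ≤ w * q, gap P q ^ α ≤ cost α Z ρ
  exists_pivot : ∃ p ∈ P,
    ρ p ^ α + ∑ q ∈ covered P ρ Z \ captured P p (ρ p), gap P q ^ α ≤ cost α Z ρ

namespace BroadcastInvariant

variable {α : ℝ} {ρ : ℝ → ℝ} {Z : Finset ℝ} {z : ℝ}

lemma source (hα : 1 ≤ α) (h0 : 0 ∈ P) (hρ : 0 ≤ ρ 0) : BroadcastInvariant α P ρ {0} := by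
  have hcov : ∀ q, q ∈ covered P ρ {0} ↔ q ∈ P ∧ |q| ≤ ρ 0 := by simp [mem_covered]
  have hcapt : ∀ q ∈ covered P ρ {0}, q = 0 ∨ q ∈ captured P 0 (ρ 0) := by
    intro q hq
    rcases eq_or_ne q 0 with rfl | hq0
    · exact Or.inl rfl
    · exact Or.inr (by simpa [mem_captured, hq0] using (hcov q).1 hq)
  have hgap : gap P 0 ^ α = 0 := by rw [gap_zero, Real.zero_rpow (by linarith)]
  refine ⟨mem_singleton_self 0, fun q hq r hr hrq => ?_, fun w hw => ?_, 0, h0, ?_⟩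
  · exact (hcov r).2 ⟨hr, (abs_le_abs_of_mem_uIcc_zero hrq).trans ((hcov q).1 hq).2⟩
  · have hsub : {q ∈ covered P ρ {0} | 0 ≤ w * q} ⊆
        {0} ∪ {q ∈ captured P 0 (ρ 0) | 0 ≤ w * q} := by
      intro q
      simp only [mem_filter, mem_union, mem_singleton]
      exact fun ⟨hq, hwq⟩ => (hcapt q hq).imp_right fun h => ⟨h, hwq⟩
    have hsum := sum_le_sum_add_sum_of_subset_union (fun q => gap_rpow_nonneg P q α) hsub
    rw [sum_singleton, hgap, zero_add] at hsum
    simpa [cost] using hsum.trans (sum_gap_rpow_captured_side_le hα h0 h0 hρ hw)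
  · have hrest : ∑ q ∈ covered P ρ {0} \ captured P 0 (ρ 0), gap P q ^ α = 0 := by
      refine sum_eq_zero fun q hq => ?_
      rw [mem_sdiff] at hq
      rwa [(hcapt q hq.1).resolve_right hq.2]
    simp [hrest, cost]

lemma mem_captured_of_notMem_covered (h : BroadcastInvariant α P ρ Z) (hz : z ∈ covered P ρ Z)
    (hq : q ∈ P) (hzq : dist z q ≤ ρ z) (hqZ : q ∉ covered P ρ Z) : q ∈ captured P z (ρ z) :=
  mem_captured.2 ⟨hq, hzq, fun hq' => hqZ (h.inward_closed z hz q hq hq')⟩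

lemma inward_closed_insert (h : BroadcastInvariant α P ρ Z) (hz : z ∈ covered P ρ Z)
    (hq : q ∈ covered P ρ (insert z Z)) (hr : r ∈ P) (hrq : r ∈ Set.uIcc 0 q) :
    r ∈ covered P ρ (insert z Z) := by
  rw [mem_covered_insert] at hq ⊢
  rcases hq with hq | ⟨-, hzq⟩
  · exact Or.inl (h.inward_closed q hq r hr hrq)
  rcases Set.uIcc_subset_uIcc_union_uIcc (b := z) hrq with hrz | hrz
  · exact Or.inl (h.inward_closed z hz r hr hrz)
  · exact Or.inr ⟨hr, (Real.dist_left_le_of_mem_uIcc hrz).trans hzq⟩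

lemma side_le_insert (h : BroadcastInvariant α P ρ Z) (hα : 1 ≤ α) (h0 : 0 ∈ P)
    (hρ : 0 ≤ ρ z) (hz : z ∈ covered P ρ Z) (hzZ : z ∉ Z) {w : ℝ} (hw : w ≠ 0) :
    ∑ q ∈ covered P ρ (insert z Z) with 0 ≤ w * q, gap P q ^ α ≤ cost α (insert z Z) ρ := by
  have hsub : {q ∈ covered P ρ (insert z Z) | 0 ≤ w * q} ⊆
      {q ∈ captured P z (ρ z) | 0 ≤ w * q} ∪ {q ∈ covered P ρ Z | 0 ≤ w * q} := by
    intro q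
    simp only [mem_filter, mem_union, mem_covered_insert]
    rintro ⟨hq, hwq⟩
    by_cases hqZ : q ∈ covered P ρ Z
    · exact Or.inr ⟨hqZ, hwq⟩
    · obtain ⟨hqP, hzq⟩ := hq.resolve_left hqZ
      exact Or.inl ⟨h.mem_captured_of_notMem_covered hz hqP hzq hqZ, hwq⟩
  rw [cost_insert hzZ]
  exact (sum_le_sum_add_sum_of_subset_union (fun q => gap_rpow_nonneg P q α) hsub).trans
    (add_le_add (sum_gap_rpow_captured_side_le hα h0 (mem_covered.1 hz).1 hρ hw) (h.side_le w hw))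

lemma exists_pivot_insert_of_same_side (h : BroadcastInvariant α P ρ Z) (hα : 1 ≤ α) (h0 : 0 ∈ P)
    (hρ : 0 ≤ ρ z) (hz : z ∈ covered P ρ Z) (hzZ : z ∉ Z)
    (hside : ∀ b ∈ P, dist z b ≤ ρ z → b ∉ covered P ρ Z → 0 ≤ z * b) :
    ∃ p ∈ P, ρ p ^ α + ∑ q ∈ covered P ρ (insert z Z) \ captured P p (ρ p), gap P q ^ α
      ≤ cost α (insert z Z) ρ := by
  obtain ⟨p, hp, hpcost⟩ := h.exists_pivot
  refine ⟨p, hp, ?_⟩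
  have hz0 : z ≠ 0 := ne_of_mem_of_not_mem h.source_mem hzZ |>.symm
  have hsub : covered P ρ (insert z Z) \ captured P p (ρ p) ⊆
      {q ∈ captured P z (ρ z) | 0 ≤ z * q} ∪ covered P ρ Z \ captured P p (ρ p) := by
    intro q
    simp only [mem_filter, mem_union, mem_sdiff, mem_covered_insert]
    rintro ⟨hq, hqp⟩
    by_cases hqZ : q ∈ covered P ρ Z
    · exact Or.inr ⟨hqZ, hqp⟩
    · obtain ⟨hqP, hzq⟩ := hq.resolve_left hqZ
      exact Or.inl ⟨h.mem_captured_of_notMem_covered hz hqP hzq hqZ, hside q hqP hzq hqZ⟩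
  have hrest :=
    sum_le_sum_add_sum_of_subset_union (fun q => gap_rpow_nonneg P q α) hsub
  have hnew := sum_gap_rpow_captured_side_le hα h0 (mem_covered.1 hz).1 hρ hz0
  rw [cost_insert hzZ]
  linarith

lemma exists_pivot_insert_of_crossing {b : ℝ} (h : BroadcastInvariant α P ρ Z)
    (hz : z ∈ covered P ρ Z) (hzZ : z ∉ Z) (hb : b ∈ P) (hzb : dist z b ≤ ρ z)
    (hbZ : b ∉ covered P ρ Z) (hneg : z * b < 0) :
    ∃ p ∈ P, ρ p ^ α + ∑ q ∈ covered P ρ (insert z Z) \ captured P p (ρ p), gap P q ^ α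
      ≤ cost α (insert z Z) ρ := by
  -- By inward-closedness everything covered so far on the side of `b` is nearer to the source than
  -- `b`, so `z` captures it all, and what remains lies on the side of `z` alone.
  refine ⟨z, (mem_covered.1 hz).1, ?_⟩
  have hz0 : z ≠ 0 := left_ne_zero_of_mul hneg.ne
  have hcross : ∀ q ∈ covered P ρ Z, z * q < 0 → q ∈ captured P z (ρ z) := by
    intro q hq hzq
    have hqb : q ∈ Set.uIcc 0 b :=
      mem_uIcc_zero_of_abs_le (neg_ne_zero.2 hz0) (by linarith) (by linarith) <| le_of_not_ge
        fun habs => hbZ <| h.inward_closed q hq b hb <| mem_uIcc_zero_of_abs_le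
          (neg_ne_zero.2 hz0) (by linarith) (by linarith) habs
    have h0zb : (0 : ℝ) ∈ Set.uIcc z b := Set.mem_uIcc.2 <|
      (mul_neg_iff.1 hneg).symm.imp (fun h => ⟨h.1.le, h.2.le⟩) fun h => ⟨h.2.le, h.1.le⟩
    have hzqb : q ∈ Set.uIcc z b := Set.uIcc_subset_uIcc_right h0zb hqb
    refine mem_captured.2 ⟨(mem_covered.1 hq).1, ?_, fun hqz => ?_⟩
    · exact (Real.dist_left_le_of_mem_uIcc hzqb).trans hzb
    · exact hzq.not_ge (mul_nonneg_of_mem_uIcc_zero hqz (mul_self_nonneg z))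
  have hsub : covered P ρ (insert z Z) \ captured P z (ρ z) ⊆ {q ∈ covered P ρ Z | 0 ≤ z * q} := by
    intro q
    simp only [mem_filter, mem_sdiff, mem_covered_insert]
    rintro ⟨hq, hqz⟩
    have hqZ : q ∈ covered P ρ Z := by
      by_contra hqZ
      obtain ⟨hqP, hzq⟩ := hq.resolve_left hqZ
      exact hqz (h.mem_captured_of_notMem_covered hz hqP hzq hqZ)
    exact ⟨hqZ, le_of_not_gt fun hzq => hqz (hcross q hqZ hzq)⟩
  rw [cost_insert hzZ]
  gcongr
  exact (sum_le_sum_of_subset_of_nonneg hsub fun q _ _ => gap_rpow_nonneg P q α).trans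
    (h.side_le z hz0)

protected lemma insert (h : BroadcastInvariant α P ρ Z) (hα : 1 ≤ α) (h0 : 0 ∈ P)
    (hρ : 0 ≤ ρ z) (hz : z ∈ covered P ρ Z) (hzZ : z ∉ Z) :
    BroadcastInvariant α P ρ (insert z Z) where
  source_mem := mem_insert_of_mem h.source_mem
  inward_closed _ hq _ hr hrq := h.inward_closed_insert hz hq hr hrq
  side_le _ hw := h.side_le_insert hα h0 hρ hz hzZ hw
  exists_pivot := by
    by_cases hside : ∀ b ∈ P, dist z b ≤ ρ z → b ∉ covered P ρ Z → 0 ≤ z * b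
    · exact h.exists_pivot_insert_of_same_side hα h0 hρ hz hzZ hside
    · push Not at hside
      obtain ⟨b, hb, hzb, hbZ, hneg⟩ := hside
      exact h.exists_pivot_insert_of_crossing hz hzZ hb hzb hbZ hneg

end BroadcastInvariant

theorem exists_pivot_of_feasible {α : ℝ} {ρ : ℝ → ℝ} (hα : 1 ≤ α) (h0 : 0 ∈ P)
    (hρ : Feasible P 0 ρ) :
    ∃ p ∈ P, ρ p ^ α + ∑ q ∈ P \ captured P p (ρ p), gap P q ^ α ≤ cost α P ρ := by
  have hinv : BroadcastInvariant α P ρ P := hρ.set_induction h0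
    (.source hα h0 (hρ.1 0 h0)) fun Z _ hZ a ha b hb hbZ hab =>
      hZ.insert hα h0 (hρ.1 b hb) (mem_covered.2 ⟨hb, a, ha, hab⟩) hbZ
  simpa only [covered_self hρ.1] using hinv.exists_pivot

theorem exists_pivot_dist_of_feasible {α : ℝ} {ρ : ℝ → ℝ} (hα : 1 ≤ α) (h0 : 0 ∈ P)
    (hρ : Feasible P 0 ρ) :
    ∃ p ∈ P, ∃ d ∈ P,
      dist p d ^ α + ∑ q ∈ P \ captured P p (dist p d), gap P q ^ α ≤ cost α P ρ := by
  obtain ⟨p, hp, hcost⟩ := exists_pivot_of_feasible hα h0 hρ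
  obtain ⟨d, hd, hmax⟩ := exists_max_image {q ∈ P | dist p q ≤ ρ p} (dist p)
    ⟨p, mem_filter.2 ⟨hp, by simpa using hρ.1 p hp⟩⟩
  obtain ⟨hdP, hpd⟩ := mem_filter.1 hd
  have hcapt : captured P p (dist p d) = captured P p (ρ p) := by
    ext q
    simp only [mem_captured]
    exact ⟨fun ⟨hq, hpq, hq'⟩ => ⟨hq, hpq.trans hpd, hq'⟩,
      fun ⟨hq, hpq, hq'⟩ => ⟨hq, hmax q (mem_filter.2 ⟨hq, hpq⟩), hq'⟩⟩
  refine ⟨p, hp, d, hdP, le_trans ?_ hcost⟩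
  rw [hcapt]
  gcongr

/-- The least range with which `r` reaches all points of `S` whose neighbour towards the source
is `r`. -/
noncomputable def linkRange (P S : Finset ℝ) (r : ℝ) : ℝ :=
  (({q ∈ S | IsPred P r q}.sup (nndist r) : ℝ≥0) : ℝ)

lemma linkRange_nonneg (P S : Finset ℝ) (r : ℝ) : 0 ≤ linkRange P S r := NNReal.coe_nonneg _

lemma dist_le_linkRange (hq : q ∈ S) (h : IsPred P r q) : dist r q ≤ linkRange P S r := by
  rw [linkRange, ← coe_nndist, NNReal.coe_le_coe]
  exact le_sup (f := nndist r) (mem_filter.2 ⟨hq, h⟩)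

lemma linkRange_congr {P' S' : Finset ℝ}
    (h : ∀ q, q ∈ S ∧ IsPred P r q ↔ q ∈ S' ∧ IsPred P' r q) :
    linkRange P S r = linkRange P' S' r := by
  have hfilter : {q ∈ S | IsPred P r q} = {q ∈ S' | IsPred P' r q} := by
    ext q
    simpa only [mem_filter] using h q
  rw [linkRange, linkRange, hfilter]

lemma linkRange_rpow_le {α : ℝ} (hα : α ≠ 0) :
    linkRange P S r ^ α ≤ ∑ q ∈ S with IsPred P r q, gap P q ^ α := by
  rcases {q ∈ S | IsPred P r q}.eq_empty_or_nonempty with hempty | hne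
  · simp [linkRange, hempty, Real.zero_rpow hα]
  · obtain ⟨q, hq, hsup⟩ := exists_mem_eq_sup _ hne (nndist r)
    rw [linkRange, hsup, coe_nndist, (mem_filter.1 hq).2.dist_eq_gap]
    exact single_le_sum (f := fun q => gap P q ^ α) (fun i _ => gap_rpow_nonneg P i α) hq

lemma cost_linkRange_le {α : ℝ} (hα : α ≠ 0) :
    cost α P (linkRange P S) ≤ ∑ q ∈ S, gap P q ^ α := by
  have hunique : ∀ q ∈ S, ∑ r ∈ P with IsPred P r q, gap P q ^ α ≤ gap P q ^ α := by
    intro q _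
    have hcard : #{r ∈ P | IsPred P r q} ≤ 1 := card_le_one.2 fun r hr r' hr' =>
      (mem_filter.1 hr).2.unique (mem_filter.1 hr').2
    rw [sum_const]
    exact (nsmul_le_nsmul_left (gap_rpow_nonneg P q α) hcard).trans_eq (one_nsmul _)
  calc cost α P (linkRange P S) ≤ ∑ r ∈ P, ∑ q ∈ S with IsPred P r q, gap P q ^ α :=
        sum_le_sum fun r _ => linkRange_rpow_le hα
    _ = ∑ q ∈ S, ∑ r ∈ P with IsPred P r q, gap P q ^ α := by
        simp only [sum_filter]
        exact sum_comm
    _ ≤ ∑ q ∈ S, gap P q ^ α := sum_le_sum hunique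

/-- The range assignment in which every point reaches exactly its neighbours away from the source,
the reference solution to which the approximation scheme stays close. -/
noncomputable def standardRange (P : Finset ℝ) : ℝ → ℝ := linkRange P P

/-- The points captured from `p` at distance `t` that are further than `c` from their neighbour
towards the source. -/
noncomputable def longCaptured (P : Finset ℝ) (p t c : ℝ) : Finset ℝ :=
  {q ∈ captured P p t | c < gap P q}

/-- The modification of the standard assignment in which `p` sends at distance `t`, and the links
longer than `c` that this makes superfluous are dropped. -/
noncomputable def pivotRange (P : Finset ℝ) (p t c r : ℝ) : ℝ :=
  max (linkRange P (P \ longCaptured P p t c) r) (if r = p then t else 0)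

lemma le_pivotRange_self (P : Finset ℝ) (p t c : ℝ) : t ≤ pivotRange P p t c p := by
  simp [pivotRange]

lemma dist_le_pivotRange {c : ℝ} (hq : q ∈ P) (hlong : q ∉ longCaptured P p t c)
    (hr : IsPred P r q) : dist r q ≤ pivotRange P p t c r :=
  (dist_le_linkRange (mem_sdiff.2 ⟨hq, hlong⟩) hr).trans (le_max_left _ _)

lemma feasible_pivotRange (h0 : 0 ∈ P) (hp : p ∈ P) (t c : ℝ) :
    Feasible P 0 (pivotRange P p t c) := by
  refine ⟨fun r _ => (linkRange_nonneg _ _ r).trans (le_max_left _ _), ?_⟩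
  have hinner : ∀ q ∈ P, q ∈ Set.uIcc 0 p → Reaches P (pivotRange P p t c) 0 q := by
    refine isPred_induction h0 (fun _ => .refl h0) fun q hq r _ hr ih hqp => ?_
    have hlong : q ∉ longCaptured P p t c := fun h =>
      (mem_captured.1 (mem_filter.1 h).1).2.2 hqp
    have hrp : r ∈ Set.uIcc 0 p := Set.uIcc_subset_uIcc_left hqp (mem_inward.1 hr.1).2.1
    exact (ih hrp).tail hq (dist_le_pivotRange hq hlong hr)
  refine isPred_induction (Q := Reaches P (pivotRange P p t c) 0) h0 (.refl h0)
    fun q hq r _ hr ih => ?_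
  by_cases hlong : q ∈ longCaptured P p t c
  · have hpq : dist p q ≤ t := (mem_captured.1 (mem_filter.1 hlong).1).2.1
    exact (hinner p hp Set.right_mem_uIcc).tail hq (hpq.trans (le_pivotRange_self P p t c))
  · exact ih.tail hq (dist_le_pivotRange hq hlong hr)

lemma card_pivotRange_ne_standardRange_le (P : Finset ℝ) (p t c : ℝ) :
    #{r ∈ P | pivotRange P p t c r ≠ standardRange P r} ≤ #(longCaptured P p t c) + 1 := by
  have hsub : {r ∈ P | pivotRange P p t c r ≠ standardRange P r} ⊆
      insert p {r ∈ P | ∃ q ∈ longCaptured P p t c, IsPred P r q} := by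
    intro r hr
    obtain ⟨hrP, hne⟩ := mem_filter.1 hr
    by_contra hout
    simp only [mem_insert, mem_filter, hrP, true_and, not_or, not_exists, not_and] at hout
    obtain ⟨hrp, hpred⟩ := hout
    have hlink : linkRange P (P \ longCaptured P p t c) r = standardRange P r :=
      linkRange_congr fun q => and_congr_left fun hq => by
        simpa using fun _ h => hpred q h hq
    rw [pivotRange, if_neg hrp, max_eq_left (linkRange_nonneg _ _ _)] at hne
    exact hne hlink
  have hpreds : #{r ∈ P | ∃ q ∈ longCaptured P p t c, IsPred P r q} ≤ #(longCaptured P p t c) :=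
    card_le_card_of_forall_subsingleton (IsPred P) (fun r hr => (mem_filter.1 hr).2)
      fun q _ r hr r' hr' => hr.2.unique hr'.2
  exact (card_le_card hsub).trans ((card_insert_le _ _).trans (by gcongr))

lemma cost_pivotRange_le {α c : ℝ} (hα : 1 ≤ α) (h0 : 0 ∈ P) (hp : p ∈ P) (ht : 0 ≤ t)
    (hc : 0 ≤ c) : cost α P (pivotRange P p t c) ≤
      t ^ α + c ^ (α - 1) * (2 * t) + ∑ q ∈ P \ captured P p t, gap P q ^ α := by
  have hα0 : α ≠ 0 := by linarith
  have hmax : ∀ r ∈ P, pivotRange P p t c r ^ α ≤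
      linkRange P (P \ longCaptured P p t c) r ^ α + if r = p then t ^ α else 0 := by
    intro r _
    have hlink := linkRange_nonneg P (P \ longCaptured P p t c) r
    rw [pivotRange, Real.rpow_max hlink (ite_nonneg ht le_rfl) (by linarith), ite_pow,
      Real.zero_rpow hα0]
    exact max_le_add_of_nonneg (Real.rpow_nonneg hlink α)
      (ite_nonneg (Real.rpow_nonneg ht α) le_rfl)
  have hshort : ∑ q ∈ captured P p t with gap P q ≤ c, gap P q ^ α ≤ c ^ (α - 1) * (2 * t) :=
    calc _ ≤ c ^ (α - 1) * ∑ q ∈ captured P p t with gap P q ≤ c, gap P q :=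
          sum_rpow_le_rpow_sub_one_mul_sum hα (fun q _ => gap_nonneg P q)
            fun q hq => (mem_filter.1 hq).2
      _ ≤ c ^ (α - 1) * ∑ q ∈ captured P p t, gap P q := by
          gcongr
          · exact fun q _ _ => gap_nonneg P q
          · exact filter_subset _ _
      _ ≤ _ := by
          gcongr
          exact sum_gap_captured_le h0 hp ht
  have hlinked : P \ longCaptured P p t c ⊆
      {q ∈ captured P p t | gap P q ≤ c} ∪ P \ captured P p t := by
    intro q
    simp only [longCaptured, mem_union, mem_sdiff, mem_filter, not_and, not_lt]
    tauto
  calc cost α P (pivotRange P p t c)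
      ≤ cost α P (linkRange P (P \ longCaptured P p t c)) + t ^ α := by
        refine (sum_le_sum hmax).trans_eq ?_
        rw [sum_add_distrib, sum_ite_eq' P p, if_pos hp, cost]
    _ ≤ ∑ q ∈ P \ longCaptured P p t c, gap P q ^ α + t ^ α := by
        gcongr
        exact cost_linkRange_le hα0
    _ ≤ _ := by
        linarith [sum_le_sum_add_sum_of_subset_union (fun q => gap_rpow_nonneg P q α) hlinked]

lemma card_standardRange_insert_ne_le (hx : x ∉ P) :
    #{r ∈ P | standardRange (insert x P) r ≠ standardRange P r} ≤ 1 := by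
  have hpred : ∀ r ∈ P, standardRange (insert x P) r ≠ standardRange P r →
      IsPred (insert x P) r x := by
    intro r hr hne
    by_contra hrx
    refine hne (linkRange_congr fun q => ⟨fun ⟨hq, hrq⟩ => ?_,
      fun ⟨hq, hrq⟩ => ⟨mem_insert_of_mem hq, hrq.insert hrx⟩⟩)
    have hqx : q ≠ x := by rintro rfl; exact hrx hrq
    exact ⟨mem_of_mem_insert_of_ne hq hqx, hrq.of_insert hr⟩
  exact card_le_one.2 fun r hr r' hr' =>
    (hpred r (mem_filter.1 hr).1 (mem_filter.1 hr).2).unique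
      (hpred r' (mem_filter.1 hr').1 (mem_filter.1 hr').2)

variable {α ε : ℝ} {K : ℕ}

lemma card_longCaptured_le (h0 : 0 ∈ P) (hp : p ∈ P) (ht : 0 ≤ t) (hK : K ≠ 0) :
    #(longCaptured P p t (2 * t / K)) ≤ K := by
  refine card_filter_lt_le_of_sum_le (by positivity) (fun q _ => gap_nonneg P q) ?_
  rw [mul_div_cancel₀ _ (Nat.cast_ne_zero.2 hK)]
  exact sum_gap_captured_le h0 hp ht

lemma exists_cost_pivotRange_le (hα : 1 < α) (hε : 0 < ε)
    (hK : (2 ^ α / ε) ^ (1 / (α - 1)) ≤ K) (h0 : 0 ∈ P) {ρ : ℝ → ℝ} (hρ : Feasible P 0 ρ) :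
    ∃ p ∈ P, ∃ d ∈ P, cost α P (pivotRange P p (dist p d) (2 * dist p d / K)) ≤
      (1 + ε) * cost α P ρ := by
  obtain ⟨p, hp, d, hd, hpivot⟩ := exists_pivot_dist_of_feasible hα.le h0 hρ
  refine ⟨p, hp, d, hd, ?_⟩
  have hrest : 0 ≤ ∑ q ∈ P \ captured P p (dist p d), gap P q ^ α :=
    sum_nonneg fun q _ => gap_rpow_nonneg P q α
  have hround := rpow_sub_one_mul_le_mul_rpow hα hε (dist_nonneg (x := p) (y := d)) hK
  calc _ ≤ dist p d ^ α + (2 * dist p d / K) ^ (α - 1) * (2 * dist p d) +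
        ∑ q ∈ P \ captured P p (dist p d), gap P q ^ α :=
        cost_pivotRange_le hα.le h0 hp dist_nonneg (by positivity)
    _ ≤ (1 + ε) * (dist p d ^ α + ∑ q ∈ P \ captured P p (dist p d), gap P q ^ α) := by
        linarith [mul_nonneg hε.le hrest]
    _ ≤ (1 + ε) * cost α P ρ := by gcongr

theorem exists_feasible_near_standardRange (hα : 1 < α) (hε : 0 < ε)
    (hK : (2 ^ α / ε) ^ (1 / (α - 1)) ≤ K) (h0 : 0 ∈ P) :
    ∃ ρ, Feasible P 0 ρ ∧ cost α P ρ ≤ (1 + ε) * opt α P 0 ∧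
      #{r ∈ P | ρ r ≠ standardRange P r} ≤ K + 1 := by
  have hK0 : K ≠ 0 := by
    have : (0 : ℝ) < K := lt_of_lt_of_le (by positivity) hK
    exact_mod_cast this.ne'
  -- Pivots sending exactly to another point of `P` form a finite family, so a best one exists and
  -- beats every feasible assignment, whether or not the infimum `opt` is attained.
  let σ : ℝ × ℝ → ℝ → ℝ := fun x => pivotRange P x.1 (dist x.1 x.2) (2 * dist x.1 x.2 / K)
  obtain ⟨⟨p, d⟩, hpd, hmin⟩ := exists_min_image (P ×ˢ P) (fun x => cost α P (σ x))
    ⟨(0, 0), mk_mem_product h0 h0⟩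
  have hp : p ∈ P := (mem_product.1 hpd).1
  have hfeas : Feasible P 0 (σ (p, d)) := feasible_pivotRange h0 hp _ _
  refine ⟨σ (p, d), hfeas, ?_, (card_pivotRange_ne_standardRange_le P p _ _).trans
    (by gcongr; exact card_longCaptured_le h0 hp dist_nonneg hK0)⟩
  rw [← div_le_iff₀' (by positivity)]
  refine le_csInf ⟨_, σ (p, d), hfeas, rfl⟩ ?_
  rintro _ ⟨ρ, hρ, rfl⟩
  obtain ⟨p', hp', d', hd', hle⟩ := exists_cost_pivotRange_le hα hε hK h0 hρ
  rw [div_le_iff₀' (by positivity)]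
  exact (hmin (p', d') (mk_mem_product hp' hd')).trans hle

end Line

lemma ncard_ne_update_le {X Y : Type*} (P : Finset X) (q : X) (y : Y) (ρ ρ' σ σ' : X → Y) :
    {p ∈ insert q (P : Set X) | ρ' p ≠ Function.update ρ q y p}.ncard ≤
      #{p ∈ P | ρ p ≠ σ p} + #{p ∈ P | σ' p ≠ σ p} + #{p ∈ insert q P | ρ' p ≠ σ' p} + 1 := by
  have hsub : {p ∈ insert q (P : Set X) | ρ' p ≠ Function.update ρ q y p} ⊆
      ↑(insert q ({p ∈ P | ρ p ≠ σ p} ∪ {p ∈ P | σ' p ≠ σ p} ∪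
        {p ∈ insert q P | ρ' p ≠ σ' p})) := by
    rintro p ⟨hp, hne⟩
    rcases eq_or_ne p q with rfl | hpq
    · exact mem_insert_self _ _
    rw [Function.update_of_ne hpq] at hne
    have hpP : p ∈ P := hp.resolve_left hpq
    by_contra hout
    simp only [coe_insert, coe_union, coe_filter, mem_insert] at hout
    grind
  calc _ ≤ _ := Set.ncard_le_ncard hsub (finite_toSet _)
    _ = _ := Set.ncard_coe_finset _
    _ ≤ _ := (card_insert_le _ _).trans <| Nat.succ_le_succ <| (card_union_le _ _).trans <|
      Nat.add_le_add_right (card_union_le _ _) _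

/-- The dynamic broadcast range-assignment problem in ℝ¹ admits a stable
approximation scheme with stability parameter `k(ε) ≤ 2⌈(2^α/ε)^{1/(α-1)}⌉ + 6`. -/
theorem sas_in_R1 (α : ℝ) (hα : 1 < α) (ε : ℝ) (hε : 0 < ε) :
    ∃ k : ℕ, 0 < k ∧ k ≤ 2 * ⌈((2:ℝ) ^ α / ε) ^ ((1:ℝ) / (α - 1))⌉₊ + 6 ∧
    ∃ F : Finset ℝ → (ℝ → ℝ),
      (∀ P : Finset ℝ, (0:ℝ) ∈ P →
        Feasible P 0 (F P) ∧ cost α P (F P) ≤ (1 + ε) * opt α P 0) ∧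
      (∀ P : Finset ℝ, (0:ℝ) ∈ P → ∀ q : ℝ, q ∉ P →
        {p ∈ insert q (P : Set ℝ) |
          F (insert q P) p ≠ Function.update (F P) q 0 p}.ncard ≤ k) := by
  set K := ⌈(2 ^ α / ε) ^ (1 / (α - 1))⌉₊
  have hnear : ∀ P : Finset ℝ, ∃ ρ, 0 ∈ P → Feasible P 0 ρ ∧ cost α P ρ ≤ (1 + ε) * opt α P 0 ∧
      #{r ∈ P | ρ r ≠ standardRange P r} ≤ K + 1 := by
    intro P
    by_cases h0 : (0 : ℝ) ∈ P
    · exact (exists_feasible_near_standardRange hα hε (Nat.le_ceil _) h0).imp fun _ h _ => h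
    · exact ⟨0, fun h => absurd h h0⟩
  choose F hF using hnear
  refine ⟨2 * K + 4, by omega, by omega, F,
    fun P h0 => ⟨(hF P h0).1, (hF P h0).2.1⟩, fun P h0 q hq => ?_⟩
  have hP := (hF P h0).2.2
  have hinsert := (hF (insert q P) (mem_insert_of_mem h0)).2.2
  have hstandard := card_standardRange_insert_ne_le hq
  have hdiff := ncard_ne_update_le P q 0 (F P) (F (insert q P)) (standardRange P)
    (standardRange (insert q P))
  omega
end

section
/- Let α > 1, let P be a finite set of more than 2 points on the circle S¹ of circumference 1 (the quotient ℝ/ℤ with its arc-length metric), with source s ∈ P. If ρ is an optimal feasible range assignment for P, i.e., ρ is feasible and cost_α(ρ) ≤ cost_α(ρ') for every feasible range assignment ρ' for P, then there exists a point r ∈ S¹ such that dist(p, r) > ρ(p) for every p ∈ P (i.e., r is not covered by any range of the optimal assignment). -/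
open Finset

attribute [local instance] Classical.propDecidable

/-!
Switch on the points of `P` one at a time, each time choosing a point that is already covered, and
suppose that the whole space gets covered when `p` is switched on. The region `U` missed so far is
open, because a finite union of closed balls is closed, and `U` lies in the ball of `p`. By
optimality the range of `p` cannot be shrunk, so some `q ∈ P ∩ U` is at distance `ρ p` from `p`.
Hence `q` is a local maximum of the distance to `p`; on the circle this makes `q` the antipode of
`p`, so that every point lies on a shortest path from `p` to `q`, and nothing else about the circle
is needed. Now pick `x ∈ P` farthest from `p` among the points other than `q`. Replacing the jump
`p → q` by `p → x → q`, whose lengths have the same sum, keeps the assignment feasible and makes it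
strictly cheaper because `t ↦ t ^ α` is strictly superadditive.
-/

open Set Metric Topology

lemma rpow_add_rpow_lt_add_rpow {α a b : ℝ} (hα : 1 < α) (ha : 0 < a) (hb : 0 < b) :
    a ^ α + b ^ α < (a + b) ^ α := by
  have rpow_eq_mul {t : ℝ} (ht : 0 < t) : t ^ α = t * t ^ (α - 1) := by
    rw [← Real.rpow_one_add' ht.le (by linarith), add_sub_cancel]
  calc a ^ α + b ^ α = a * a ^ (α - 1) + b * b ^ (α - 1) := by
        rw [rpow_eq_mul ha, rpow_eq_mul hb]
    _ < a * (a + b) ^ (α - 1) + b * (a + b) ^ (α - 1) := by gcongr <;> linarith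
    _ = (a + b) ^ α := by rw [← add_mul, rpow_eq_mul (add_pos ha hb)]

lemma not_isLocalMax_norm {E : Type*} [NormedAddCommGroup E] [NormedSpace ℝ E] [Nontrivial E]
    (z : E) : ¬ IsLocalMax (fun x : E ↦ ‖x‖) z := by
  intro h
  have hz : z ∈ interior (closedBall 0 ‖z‖) := by
    rw [mem_interior_iff_mem_nhds]
    filter_upwards [h] with x hx using mem_closedBall_zero_iff.2 hx
  rw [interior_closedBall', mem_ball_zero_iff] at hz
  exact hz.false

section Circle

lemma coe_addCircle_add_half (T z : ℝ) :
    ((z + T / 2 : ℝ) : AddCircle T) = ((z - T / 2 : ℝ) : AddCircle T) := by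
  rw [← AddCircle.coe_add_period T (z - T / 2)]
  congr 1
  ring

variable {T : ℝ} [hT : Fact (0 < T)]

lemma norm_coe_addCircle_eq_abs {z : ℝ} (hz : |z| ≤ T / 2) : ‖(z : AddCircle T)‖ = |z| := by
  rwa [AddCircle.norm_coe_eq_abs_iff T hT.out.ne', abs_of_pos hT.out]

lemma exists_coe_addCircle_eq (x : AddCircle T) :
    ∃ z ∈ Ico (-(T / 2)) (T / 2), (z : AddCircle T) = x := by
  have hx : x ∈ ((↑) : ℝ → AddCircle T) '' Ico (-(T / 2)) (-(T / 2) + T) :=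
    AddCircle.coe_image_Ico_eq T _ ▸ mem_univ x
  rwa [show -(T / 2) + T = T / 2 by ring] at hx

lemma norm_add_norm_sub_half (x : AddCircle T) :
    ‖x‖ + ‖x - ((T / 2 : ℝ) : AddCircle T)‖ = T / 2 := by
  obtain ⟨z, ⟨hz₁, hz₂⟩, rfl⟩ := exists_coe_addCircle_eq x
  rw [norm_coe_addCircle_eq_abs (abs_le.2 ⟨hz₁, hz₂.le⟩), ← AddCircle.coe_sub]
  rcases le_total 0 z with hz | hz
  · have habs : |z - T / 2| = T / 2 - z := by rw [abs_of_neg (by linarith), neg_sub]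
    rw [norm_coe_addCircle_eq_abs (by linarith), habs, abs_of_nonneg hz]
    ring
  · have habs : |z + T / 2| = z + T / 2 := abs_of_nonneg (by linarith)
    rw [← coe_addCircle_add_half T, norm_coe_addCircle_eq_abs (by linarith), habs, abs_of_nonpos hz]
    ring

lemma eq_half_of_isLocalMax_norm {x : AddCircle T} (hx : IsLocalMax (fun y ↦ ‖y‖) x) :
    x = ((T / 2 : ℝ) : AddCircle T) := by
  obtain ⟨z, ⟨hz₁, hz₂⟩, rfl⟩ := exists_coe_addCircle_eq x
  rcases hz₁.eq_or_lt with rfl | hz₁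
  · simpa using (coe_addCircle_add_half T 0).symm
  · have hnorm : (fun y : ℝ ↦ ‖(y : AddCircle T)‖) =ᶠ[𝓝 z] fun y ↦ ‖y‖ := by
      filter_upwards [Ioo_mem_nhds hz₁ hz₂] with y hy
      exact norm_coe_addCircle_eq_abs (abs_le.2 ⟨hy.1.le, hy.2.le⟩)
    have hmax : IsLocalMax (fun y : ℝ ↦ ‖(y : AddCircle T)‖) z :=
      hx.comp_tendsto (AddCircle.continuous_mk' T).continuousAt
    exact absurd (hnorm.isLocalMax_iff.1 hmax) (not_isLocalMax_norm z)

theorem dist_add_dist_eq_of_isLocalMax_dist {p q : AddCircle T} (hq : IsLocalMax (dist p) q)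
    (x : AddCircle T) : dist p x + dist x q = dist p q := by
  have hmax : IsLocalMax (fun y ↦ ‖y‖) (q - p) := by
    have htrans : Filter.Tendsto (fun y ↦ p + y) (𝓝 (q - p)) (𝓝 q) :=
      Continuous.tendsto' (by fun_prop) _ _ (add_sub_cancel p q)
    filter_upwards [htrans.eventually hq] with y hy
    simpa [dist_eq_norm'] using hy
  have hsum (y : AddCircle T) : dist p y + dist y q = T / 2 := by
    rw [dist_eq_norm' p, dist_eq_norm, ← norm_add_norm_sub_half (y - p),
      ← eq_half_of_isLocalMax_norm hmax, sub_sub_sub_cancel_right]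
  rw [hsum, ← hsum q, dist_self, add_zero]

end Circle

lemma cost_update {X : Type*} {P : Finset X} {p : X} (α : ℝ) (hp : p ∈ P) (ρ : X → ℝ) (t : ℝ) :
    cost α P (Function.update ρ p t) + ρ p ^ α = cost α P ρ + t ^ α := by
  have hrest : cost α (P.erase p) (Function.update ρ p t) = cost α (P.erase p) ρ :=
    Finset.sum_congr rfl fun u hu ↦ by rw [Function.update_of_ne (Finset.ne_of_mem_erase hu)]
  unfold cost at hrest ⊢
  rw [← Finset.sum_erase_add P _ hp, ← Finset.sum_erase_add P (fun u ↦ ρ u ^ α) hp, hrest,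
    Function.update_self]
  ring

section MetricSpace

variable {X : Type*} [MetricSpace X] {P A B : Finset X} {s p q x : X} {ρ ρ' : X → ℝ} {α : ℝ}

/-- The region heard from when exactly the points of `A` transmit; the source `s` always belongs to
it, so that `s` can be the first point to be switched on. -/
def coverage (s : X) (ρ : X → ℝ) (A : Finset X) : Set X :=
  {s} ∪ ⋃ u ∈ A, closedBall u (ρ u)

lemma mem_coverage : x ∈ coverage s ρ A ↔ x = s ∨ ∃ u ∈ A, dist u x ≤ ρ u := by
  simp [coverage, dist_comm x]

lemma mem_coverage_of_mem (hp : p ∈ A) (hx : dist p x ≤ ρ p) : x ∈ coverage s ρ A :=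
  mem_coverage.2 (.inr ⟨p, hp, hx⟩)

lemma isClosed_coverage : IsClosed (coverage s ρ A) :=
  isClosed_singleton.union (isClosed_biUnion_finset fun _ _ ↦ isClosed_closedBall)

lemma coverage_empty : coverage s ρ ∅ = {s} := by
  simp [coverage]

lemma coverage_insert : coverage s ρ (insert p A) = closedBall p (ρ p) ∪ coverage s ρ A := by
  rw [coverage, Finset.set_biUnion_insert, union_left_comm, coverage]

lemma coverage_mono (h : ∀ u ∈ A, ρ u ≤ ρ' u) : coverage s ρ A ⊆ coverage s ρ' A :=
  union_subset_union_right _ (iUnion₂_mono fun u hu ↦ closedBall_subset_closedBall (h u hu))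

namespace Feasible

protected lemma empty : Feasible ∅ s ρ := by
  simp [Feasible]

lemma subset_coverage (hA : Feasible A s ρ) : (A : Set X) ⊆ coverage s ρ A :=
  fun u hu ↦ mem_coverage_of_mem hu (by simpa using hA.1 u hu)

lemma mono (hA : Feasible A s ρ) (h : ∀ u ∈ A, ρ u ≤ ρ' u) : Feasible A s ρ' := by
  refine ⟨fun u hu ↦ (hA.1 u hu).trans (h u hu), fun u hu ↦ ?_⟩
  obtain ⟨m, f, hf₀, hfm, hfA, hstep⟩ := hA.2 u hu
  exact ⟨m, f, hf₀, hfm, hfA, fun i hi ↦ (hstep i hi).trans (h _ (hfA i hi.le))⟩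

lemma of_subset_coverage (hA : Feasible A s ρ) (hAB : A ⊆ B) (hB : (B : Set X) ⊆ coverage s ρ A)
    (h₀ : ∀ u ∈ B, 0 ≤ ρ u) : Feasible B s ρ := by
  refine ⟨h₀, fun v hv ↦ ?_⟩
  rcases mem_coverage.1 (hB hv) with rfl | ⟨u, hu, huv⟩
  · exact ⟨0, fun _ ↦ v, rfl, rfl, fun _ _ ↦ hv, by simp⟩
  · obtain ⟨m, f, hf₀, rfl, hfA, hstep⟩ := hA.2 u hu
    refine ⟨m + 1, fun i ↦ if i ≤ m then f i else v, by simp [hf₀], by simp, fun i _ ↦ ?_,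
      fun i hi ↦ ?_⟩
    · by_cases him : i ≤ m
      · simpa [him] using hAB (hfA i him)
      · simpa [him] using hv
    · rcases (Nat.le_of_lt_succ hi).eq_or_lt with rfl | him
      · simpa using huv
      · simpa [him.le, Nat.succ_le_of_lt him] using hstep i him

protected lemma insert (hA : Feasible A s ρ) (hp : p ∈ coverage s ρ A) (h₀ : 0 ≤ ρ p) :
    Feasible (insert p A) s ρ := by
  refine hA.of_subset_coverage (Finset.subset_insert p A) ?_ ?_
  · rw [Finset.coe_insert]
    exact insert_subset hp hA.subset_coverage
  · exact Finset.forall_mem_insert .. |>.2 ⟨h₀, hA.1⟩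

lemma exists_mem_coverage (hρ : Feasible P s ρ) (hPA : ¬ P ⊆ A) :
    ∃ p ∈ P, p ∉ A ∧ p ∈ coverage s ρ A := by
  obtain ⟨q, hqP, hqA⟩ := Finset.not_subset.1 hPA
  obtain ⟨m, f, hf₀, rfl, hfP, hstep⟩ := hρ.2 q hqP
  by_contra! hnone
  have hfA (i : ℕ) : i ≤ m → f i ∈ A := by
    induction i with
    | zero =>
      intro hi
      by_contra hfi
      exact hnone _ (hfP 0 hi) hfi (mem_coverage.2 (.inl hf₀))
    | succ i ih =>
      intro hi
      by_contra hfi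
      exact hnone _ (hfP _ hi) hfi (mem_coverage_of_mem (ih (by omega)) (hstep i hi))
  exact hqA (hfA m le_rfl)

theorem induction {motive : Finset X → Prop} (hρ : Feasible P s ρ) (empty : motive ∅)
    (insert : ∀ A p, A ⊆ P → Feasible A s ρ → p ∈ P → p ∉ A → p ∈ coverage s ρ A →
      motive A → motive (insert p A)) : motive P := by
  obtain ⟨A, hA⟩ := (P.powerset.filter fun A ↦ Feasible A s ρ ∧ motive A).exists_maximal
    ⟨∅, by simp [Feasible.empty, empty]⟩
  simp only [Finset.mem_filter, Finset.mem_powerset] at hA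
  obtain ⟨hAP, hAs, hAm⟩ := hA.prop
  suffices P ⊆ A from hAP.antisymm this ▸ hAm
  by_contra hPA
  obtain ⟨p, hp, hpA, hpc⟩ := hρ.exists_mem_coverage hPA
  have hle := hA.le_of_ge ⟨Finset.insert_subset hp hAP, hAs.insert hpc (hρ.1 p hp),
    insert A p hAP hAs hp hpA hpc hAm⟩ (Finset.subset_insert p A)
  exact hpA (hle (Finset.mem_insert_self p A))

end Feasible

lemma feasible_update {t : ℝ} (hρ : Feasible P s ρ) (hA : Feasible A s ρ) (hAP : A ⊆ P)
    (hp : p ∈ P) (hpA : p ∉ A) (hpc : p ∈ coverage s ρ A) (ht : 0 ≤ t)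
    (hfar : ∀ q ∈ P, q ∉ coverage s ρ A → dist p q ≤ t) :
    Feasible P s (Function.update ρ p t) := by
  set ρ' := Function.update ρ p t
  have hp_eq : ρ' p = t := Function.update_self ..
  have heq {u : X} (hu : u ≠ p) : ρ' u = ρ u := Function.update_of_ne hu ..
  have hle : ∀ u ∈ A, ρ u ≤ ρ' u := fun u hu ↦ (heq (ne_of_mem_of_not_mem hu hpA)).ge
  have hinsert : Feasible (insert p A) s ρ' :=
    (hA.mono hle).insert (coverage_mono hle hpc) (ht.trans hp_eq.ge)
  refine hinsert.of_subset_coverage (Finset.insert_subset hp hAP) (fun q hq ↦ ?_) fun u hu ↦ ?_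
  · rw [coverage_insert]
    by_cases hqc : q ∈ coverage s ρ A
    · exact .inr (coverage_mono hle hqc)
    · exact .inl (mem_closedBall'.2 ((hfar q hq hqc).trans hp_eq.ge))
  · rcases eq_or_ne u p with rfl | hup
    · exact ht.trans hp_eq.ge
    · exact (hρ.1 u hu).trans (heq hup).ge

lemma exists_notMem_coverage_le_dist (hα : 0 < α) (hρ : Feasible P s ρ)
    (hopt : IsMinOn (cost α P) {ρ' | Feasible P s ρ'} ρ) (hA : Feasible A s ρ) (hAP : A ⊆ P)
    (hp : p ∈ P) (hpA : p ∉ A) (hpc : p ∈ coverage s ρ A) (hpos : 0 < ρ p) :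
    ∃ q ∈ P, q ∉ coverage s ρ A ∧ ρ p ≤ dist p q := by
  by_contra! hnear
  obtain ⟨x, hx, hfar⟩ := (insert p (P.filter (· ∉ coverage s ρ A))).exists_max_image (dist p)
    (Finset.insert_nonempty _ _)
  simp only [Finset.mem_insert, Finset.mem_filter] at hx hfar
  have hxp : dist p x < ρ p := by
    rcases hx with rfl | ⟨hxP, hxc⟩
    · simpa using hpos
    · exact hnear x hxP hxc
  have hfeas : Feasible P s (Function.update ρ p (dist p x)) :=
    feasible_update hρ hA hAP hp hpA hpc dist_nonneg fun q hq hqc ↦ hfar q (.inr ⟨hq, hqc⟩)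
  have hcost := cost_update α hp ρ (dist p x)
  have hlt : dist p x ^ α < ρ p ^ α := Real.rpow_lt_rpow dist_nonneg hxp hα
  have hmin : cost α P ρ ≤ cost α P (Function.update ρ p (dist p x)) := hopt hfeas
  linarith

/-- The assignment obtained from `ρ` by replacing the jump from `p` to `q` by the two jumps
`p → x → q`; the range of `x` never decreases, whereas that of `p` is reset to `dist p x`. -/
noncomputable def detour (ρ : X → ℝ) (p x q : X) : X → ℝ :=
  Function.update (Function.update ρ x (max (ρ x) (dist x q))) p (dist p x)

lemma detour_self : detour ρ p x q p = dist p x := by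
  simp [detour]

lemma detour_via (hxp : x ≠ p) : detour ρ p x q x = max (ρ x) (dist x q) := by
  simp [detour, hxp]

lemma le_detour {u : X} (hu : u ≠ p) : ρ u ≤ detour ρ p x q u := by
  rcases eq_or_ne u x with rfl | hux
  · exact (le_max_left _ _).trans (detour_via hu).ge
  · simp [detour, hu, hux]

lemma cost_detour_lt (hα : 1 < α) (hp : p ∈ P) (hx : x ∈ P) (hxp : x ≠ p) (hxq : x ≠ q)
    (hρx : 0 ≤ ρ x) (hpq : dist p x + dist x q ≤ ρ p) :
    cost α P (detour ρ p x q) < cost α P ρ := by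
  have hx_update := cost_update α hx ρ (max (ρ x) (dist x q))
  have hp_update := cost_update α hp (Function.update ρ x (max (ρ x) (dist x q))) (dist p x)
  rw [Function.update_of_ne hxp.symm, ← detour] at hp_update
  have hmax : max (ρ x) (dist x q) ^ α ≤ ρ x ^ α + dist x q ^ α := by
    have := Real.rpow_nonneg hρx α
    have := Real.rpow_nonneg (dist_nonneg (x := x) (y := q)) α
    rcases max_choice (ρ x) (dist x q) with h | h <;> rw [h] <;> linarith
  have hsplit : dist p x ^ α + dist x q ^ α < ρ p ^ α :=
    (rpow_add_rpow_lt_add_rpow hα (dist_pos.2 hxp.symm) (dist_pos.2 hxq)).trans_le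
      (Real.rpow_le_rpow (by positivity) hpq (by linarith))
  linarith

lemma feasible_detour (hρ : Feasible P s ρ) (hA : Feasible A s ρ) (hAP : A ⊆ P) (hp : p ∈ P)
    (hpA : p ∉ A) (hpc : p ∈ coverage s ρ A) (hqA : q ∉ A) (hpq : p ≠ q) (hx : x ∈ P)
    (hxp : x ≠ p) (hxq : x ≠ q) (hfar : ∀ y ∈ P, y ≠ q → dist p y ≤ dist p x) :
    Feasible P s (detour ρ p x q) := by
  have hle : ∀ u ∈ A, ρ u ≤ detour ρ p x q u := fun u hu ↦
    le_detour (ne_of_mem_of_not_mem hu hpA)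
  have hnonneg : ∀ u ∈ P, 0 ≤ detour ρ p x q u := fun u hu ↦ by
    rcases eq_or_ne u p with rfl | hup
    · exact dist_nonneg.trans detour_self.ge
    · exact (hρ.1 u hu).trans (le_detour hup)
  have hinsert : Feasible (insert p A) s (detour ρ p x q) :=
    (hA.mono hle).insert (coverage_mono hle hpc) (hnonneg p hp)
  have herase : Feasible (P.erase q) s (detour ρ p x q) := by
    refine hinsert.of_subset_coverage ?_ (fun y hy ↦ ?_)
      fun u hu ↦ hnonneg u (Finset.mem_of_mem_erase hu)
    · exact Finset.insert_subset (Finset.mem_erase.2 ⟨hpq, hp⟩)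
        (Finset.subset_erase.2 ⟨hAP, hqA⟩)
    · obtain ⟨hyq, hy⟩ := Finset.mem_erase.1 hy
      exact mem_coverage_of_mem (Finset.mem_insert_self p A) ((hfar y hy hyq).trans detour_self.ge)
  refine herase.of_subset_coverage (Finset.erase_subset q P) (fun y hy ↦ ?_) hnonneg
  rcases eq_or_ne y q with rfl | hyq
  · exact mem_coverage_of_mem (Finset.mem_erase.2 ⟨hxq, hx⟩)
      ((le_max_right _ _).trans (detour_via hxp).ge)
  · exact herase.subset_coverage (Finset.mem_erase.2 ⟨hyq, hy⟩)

theorem card_le_two_of_dist_add_dist_eq (hα : 1 < α) (hρ : Feasible P s ρ)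
    (hopt : IsMinOn (cost α P) {ρ' | Feasible P s ρ'} ρ) (hA : Feasible A s ρ) (hAP : A ⊆ P)
    (hp : p ∈ P) (hpA : p ∉ A) (hpc : p ∈ coverage s ρ A) (hqA : q ∉ A) (hpq : dist p q ≤ ρ p)
    (hbetween : ∀ x ∈ P, dist p x + dist x q = dist p q) : P.card ≤ 2 := by
  by_contra! hcard
  obtain ⟨x, hx, hfar⟩ := (P \ {p, q}).exists_max_image (dist p)
    (Finset.sdiff_nonempty_of_card_lt_card (Finset.card_le_two.trans_lt hcard))
  simp only [Finset.mem_sdiff, Finset.mem_insert, Finset.mem_singleton, not_or] at hx hfar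
  obtain ⟨hxP, hxp, hxq⟩ := hx
  have hne : p ≠ q := by
    have hlt := dist_pos.2 hxq
    exact dist_pos.1 (by linarith [hbetween x hxP, dist_nonneg (x := p) (y := x)])
  have hdetour : Feasible P s (detour ρ p x q) := by
    refine feasible_detour hρ hA hAP hp hpA hpc hqA hne hxP hxp hxq fun y hy hyq ↦ ?_
    rcases eq_or_ne y p with rfl | hyp
    · simp
    · exact hfar y ⟨hy, hyp, hyq⟩
  exact (cost_detour_lt hα hp hxP hxp hxq (hρ.1 x hxP) ((hbetween x hxP).trans_le hpq)).not_ge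
    (hopt hdetour)

theorem coverage_insert_ne_univ (hα : 1 < α) (hcard : 2 < P.card) (hρ : Feasible P s ρ)
    (hopt : IsMinOn (cost α P) {ρ' | Feasible P s ρ'} ρ)
    (hmax : ∀ p ∈ P, ∀ q ∈ P, IsLocalMax (dist p) q → ∀ x ∈ P, dist p x + dist x q = dist p q)
    (hA : Feasible A s ρ) (hAP : A ⊆ P) (hp : p ∈ P) (hpA : p ∉ A) (hpc : p ∈ coverage s ρ A)
    (hcov : coverage s ρ A ≠ univ) : coverage s ρ (insert p A) ≠ univ := by
  intro huniv
  rw [coverage_insert] at huniv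
  have hgap {u : X} (hu : u ∉ coverage s ρ A) : dist p u ≤ ρ p :=
    mem_closedBall'.1 ((huniv.ge (mem_univ u)).resolve_right hu)
  obtain ⟨u, hu⟩ := (ne_univ_iff_exists_notMem _).1 hcov
  have hpos : 0 < ρ p := (dist_pos.2 (ne_of_mem_of_not_mem hpc hu)).trans_le (hgap hu)
  obtain ⟨q, hq, hqc, hle⟩ :=
    exists_notMem_coverage_le_dist (by linarith) hρ hopt hA hAP hp hpA hpc hpos
  have hlocal : IsLocalMax (dist p) q := by
    filter_upwards [isClosed_coverage.isOpen_compl.mem_nhds hqc] with y hy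
    exact (hgap hy).trans hle
  exact hcard.not_ge (card_le_two_of_dist_add_dist_eq hα hρ hopt hA hAP hp hpA hpc
    (fun hqA ↦ hqc (hA.subset_coverage hqA)) (hgap hqc) (hmax p hp q hq hlocal))

theorem optimal_circle_uncovered_point_general (hα : 1 < α) (hcard : 2 < P.card)
    (hfeas : Feasible P s ρ) (hopt : IsMinOn (cost α P) {ρ' | Feasible P s ρ'} ρ)
    (hmax : ∀ p ∈ P, ∀ q ∈ P, IsLocalMax (dist p) q → ∀ x ∈ P, dist p x + dist x q = dist p q) :
    ∃ r, ∀ p ∈ P, ρ p < dist p r := by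
  have hcov : coverage s ρ P ≠ univ := by
    refine hfeas.induction (motive := fun A ↦ coverage s ρ A ≠ univ) ?_ fun A p hAP hA hp hpA hpc ↦
      coverage_insert_ne_univ hα hcard hfeas hopt hmax hA hAP hp hpA hpc
    obtain ⟨t, -, ht⟩ := Finset.exists_mem_ne (one_lt_two.trans hcard) s
    rw [coverage_empty]
    exact (ne_univ_iff_exists_notMem _).2 ⟨t, ht⟩
  obtain ⟨r, hr⟩ := (ne_univ_iff_exists_notMem _).1 hcov
  exact ⟨r, fun p hp ↦ not_le.1 fun hle ↦ hr (mem_coverage_of_mem hp hle)⟩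

end MetricSpace

/-- For any optimal feasible range assignment on a set of more than 2 points
on the circle `S¹ = ℝ/ℤ` of circumference 1, some point `r` of the circle is uncovered. -/
theorem optimal_circle_uncovered_point (α : ℝ) (hα : 1 < α)
    (P : Finset (AddCircle (1:ℝ))) (s : AddCircle (1:ℝ)) (hs : s ∈ P) (hcard : 2 < P.card)
    (ρ : AddCircle (1:ℝ) → ℝ) (hfeas : Feasible P s ρ)
    (hopt : ∀ ρ' : AddCircle (1:ℝ) → ℝ, Feasible P s ρ' → cost α P ρ ≤ cost α P ρ') :
    ∃ r : AddCircle (1:ℝ), ∀ p ∈ P, ρ p < dist p r :=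
  optimal_circle_uncovered_point_general hα hcard hfeas hopt
    fun _ _ _ _ hq x _ ↦ dist_add_dist_eq_of_isLocalMax_dist hq x
end
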